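/- arXiv:2105.07006 — 2 statements merged into one kernel-verified Lean document; each statement's English description precedes it below -/
import Mathlib

section
/- Let I = (G_S, G_R, d_R, d_S, c_S) be a VNEP instance whose substrate G_S is a bidirectional tree rooted at p. Let Ĩ = (G̃_S, G_R, d_R, d̃_S, c̃_S) be obtained from I as follows: for every node v of G_S that has at least one child, add a fresh node v′ together with the edges (v, v′) and (v′, v), and set d̃_S(v) := 0, d̃_S(v′) := d_S(v), c̃_S(v′) := c_S(v), d̃_S(v, v′) := d̃_S(v′, v) := ∞ and c̃_S(v, v′) := c̃_S(v′, v) := 0; all other capacities and costs are unchanged. Then every node of G̃_S of degree at least two has capacity 0, and for every k ∈ ℝ≥0: I has a feasible mapping of cost at most k if and only if Ĩ has a feasible mapping of cost at most k. -/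
open scoped BigOperators NNReal ENNReal Classical

/-- A rooted tree on vertex set `V`: a root together with a parent function such that the
root is its own parent and every vertex reaches the root by iterating the parent function.
The associated bidirectional tree substrate has the directed edges `(u, v)` and `(v, u)`
for every non-root `u` with parent `v`. -/
structure RTree (V : Type*) where
  root : V
  parent : V → V
  parent_root : parent root = root
  reaches_root : ∀ v : V, ∃ n : ℕ, parent^[n] v = root

namespace RTree

variable {V : Type*}

/-- `u` is a child of `v`. -/
def IsChild (T : RTree V) (u v : V) : Prop := u ≠ v ∧ T.parent u = v

/-- `w` lies in the subtree `T_v` rooted at `v` (i.e. `w` is `v` or a descendant of `v`). -/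
def InSubtree (T : RTree V) (v w : V) : Prop := ∃ n : ℕ, T.parent^[n] w = v

/-- The directed edge set of the bidirectional tree substrate associated to a rooted tree:
both orientations of every parent-child pair. -/
noncomputable def edges [Fintype V] [DecidableEq V] (T : RTree V) : Finset (V × V) :=
  Finset.univ.filter fun e => e.1 ≠ e.2 ∧ (T.parent e.1 = e.2 ∨ T.parent e.2 = e.1)

end RTree

/-- A VNEP instance: a substrate digraph `(VS, ES)` with `τ`-dimensional node and edge
capacities (`dSv`, `dSe`, valued in `[0, ∞]`) and costs (`cSv`, `cSe`), and a request
digraph `(VR, ER)` with `τ`-dimensional node and edge demands (`dRv`, `dRe`). -/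
structure VNEP (VS VR : Type*) (τ : ℕ) where
  ES : Finset (VS × VS)
  ER : Finset (VR × VR)
  dSv : VS → Fin τ → ℝ≥0∞
  dSe : VS × VS → Fin τ → ℝ≥0∞
  cSv : VS → Fin τ → ℝ≥0
  cSe : VS × VS → Fin τ → ℝ≥0
  dRv : VR → Fin τ → ℝ≥0
  dRe : VR × VR → Fin τ → ℝ≥0

/-- The list of directed edges traversed by a path given as a list of vertices. -/
def pathEdges {α : Type*} (p : List α) : List (α × α) := p.zip p.tail

/-- A simple directed path from `a` to `b` with respect to the edge relation `E`, given as
its (nonempty, duplicate-free) list of vertices; a single-vertex list is a path of length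
zero. -/
def IsDiPath {α : Type*} (E : α → α → Prop) (a b : α) (p : List α) : Prop :=
  p.head? = some a ∧ p.getLast? = some b ∧ List.Chain' E p ∧ p.Nodup

/-- A mapping of a request into a substrate: `mV` maps request nodes to substrate nodes and
`mE` assigns to each request edge a list of substrate vertices (its intended path). -/
structure Mapping (VS VR : Type*) where
  mV : VR → VS
  mE : VR × VR → List VS

section VNEPDefs

variable {VS VR : Type*} {τ : ℕ}

/-- A mapping is valid if every request edge is mapped to a simple directed path in the
substrate between the images of its endpoints. -/
def Mapping.Valid (I : VNEP VS VR τ) (M : Mapping VS VR) : Prop :=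
  ∀ e ∈ I.ER, IsDiPath (fun a b => (a, b) ∈ I.ES) (M.mV e.1) (M.mV e.2) (M.mE e)

/-- A mapping is feasible if it is valid and all node and edge capacities are respected by
the cumulative demands mapped onto them. -/
noncomputable def Mapping.Feasible [Fintype VR] [DecidableEq VS] (I : VNEP VS VR τ)
    (M : Mapping VS VR) : Prop :=
  M.Valid I ∧
  (∀ v : VS, ∀ t : Fin τ,
    ((∑ w ∈ Finset.univ.filter (fun w => M.mV w = v), I.dRv w t : ℝ≥0) : ℝ≥0∞) ≤ I.dSv v t) ∧
  (∀ eS ∈ I.ES, ∀ t : Fin τ,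
    ((∑ eR ∈ I.ER.filter (fun eR => eS ∈ pathEdges (M.mE eR)), I.dRe eR t : ℝ≥0) : ℝ≥0∞) ≤
      I.dSe eS t)

/-- The cost of a mapping: `∑_w ⟨d_R(w), c_S(m_V(w))⟩ + ∑_{e ∈ E_R} ∑_{e' ∈ m_E(e)}
⟨d_R(e), c_S(e')⟩`. -/
noncomputable def Mapping.cost [Fintype VR] [DecidableEq VS] (I : VNEP VS VR τ)
    (M : Mapping VS VR) : ℝ≥0 :=
  (∑ w : VR, ∑ t, I.dRv w t * I.cSv (M.mV w) t) +
    ∑ e ∈ I.ER, ∑ e' ∈ (pathEdges (M.mE e)).toFinset, ∑ t, I.dRe e t * I.cSe e' t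

end VNEPDefs

/-! A leaf of the transformed substrate can be visited only at an end of a simple path, since
entering and leaving it would repeat its neighbour. Hence collapsing every leaf onto its neighbour
turns simple paths into simple paths, and conversely a simple path extends to the leaves at its two
ends; both operations preserve the set of original edges used. The edges to the leaves have infinite
capacity and zero cost, so feasibility and cost are preserved as soon as the demand formerly on a
node with a leaf sits on that leaf. For the degree claim, a leaf has a single neighbour and a node
without a leaf keeps its neighbours; in a rooted tree, a childless node has at most its parent as
neighbour. -/

section DiPath

variable {α β : Type*} {E : α → α → Prop} {a b c : α} {p q : List α}

namespace IsDiPath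

theorem singleton (a : α) : IsDiPath E a a [a] :=
  ⟨rfl, rfl, List.isChain_singleton a, List.nodup_singleton a⟩

theorem cons (hac : E a c) (ha : a ∉ q) (hq : IsDiPath E c b q) : IsDiPath E a b (a :: q) := by
  obtain ⟨hhead, hlast, hchain, hnodup⟩ := hq
  refine ⟨rfl, ?_, List.isChain_cons.2 ⟨?_, hchain⟩, List.nodup_cons.2 ⟨ha, hnodup⟩⟩
  · simp [List.getLast?_cons, hlast]
  · simpa [hhead] using hac

theorem concat (hp : IsDiPath E a b p) (hbc : E b c) (hc : c ∉ p) :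
    IsDiPath E a c (p ++ [c]) := by
  obtain ⟨hhead, hlast, hchain, hnodup⟩ := hp
  refine ⟨by simp [hhead], by simp, List.isChain_append.2 ⟨hchain, by simp, ?_⟩, ?_⟩
  · simpa [hlast] using hbc
  · simpa [List.nodup_append] using ⟨hnodup, fun x hx hxc => hc (hxc ▸ hx)⟩

theorem map {E' : β → β → Prop} {f : α → β} (hf : Function.Injective f)
    (hE : ∀ x y, E x y → E' (f x) (f y)) (hp : IsDiPath E a b p) :
    IsDiPath E' (f a) (f b) (p.map f) := by
  obtain ⟨hhead, hlast, hchain, hnodup⟩ := hp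
  exact ⟨by simp [hhead], by simp [hlast], List.isChain_map_of_isChain f hE hchain,
    hnodup.map hf⟩

theorem eq_singleton_or_eq_cons (hp : IsDiPath E a b p) :
    (a = b ∧ p = [a]) ∨ ∃ c q, p = a :: q ∧ E a c ∧ a ∉ q ∧ IsDiPath E c b q := by
  obtain ⟨hhead, hlast, hchain, hnodup⟩ := hp
  match p with
  | [] => simp at hhead
  | [x] => exact .inl (by simp_all)
  | x :: c :: q =>
    obtain rfl : x = a := by simpa using hhead
    obtain ⟨hxc, hchain⟩ := List.isChain_cons_cons.1 hchain
    obtain ⟨hx, hnodup⟩ := List.nodup_cons.1 hnodup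
    rw [List.getLast?_cons_cons] at hlast
    exact .inr ⟨c, c :: q, rfl, hxc, hx, rfl, hlast, hchain, hnodup⟩

theorem eq_singleton (hp : IsDiPath E a a p) : p = [a] := by
  rcases hp.eq_singleton_or_eq_cons with ⟨-, rfl⟩ | ⟨c, q, -, -, ha, hq⟩
  · rfl
  · exact absurd (List.mem_of_getLast? hq.2.1) ha

@[elab_as_elim]
theorem induction {motive : ∀ a p, IsDiPath E a b p → Prop}
    (singleton : motive b [b] (IsDiPath.singleton b))
    (cons : ∀ a c q (hac : E a c) (ha : a ∉ q) (hq : IsDiPath E c b q), motive c q hq →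
      motive a (a :: q) (IsDiPath.cons hac ha hq))
    (hp : IsDiPath E a b p) : motive a p hp := by
  induction p generalizing a with
  | nil => simp [IsDiPath] at hp
  | cons x p ih =>
    rcases hp.eq_singleton_or_eq_cons with ⟨rfl, h⟩ | ⟨c, q, h, hac, ha, hq⟩
    · obtain ⟨rfl, rfl⟩ := List.cons.inj h
      exact singleton
    · obtain ⟨rfl, rfl⟩ := List.cons.inj h
      exact cons x c p hac ha hq (ih hq)

theorem mem_pathEdges_cons (hq : IsDiPath E c b q) {e : α × α} :
    e ∈ pathEdges (a :: q) ↔ e = (a, c) ∨ e ∈ pathEdges q := by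
  rcases hq.eq_singleton_or_eq_cons with ⟨-, rfl⟩ | ⟨-, -, rfl, -⟩ <;> simp [pathEdges]

theorem rel_of_mem_pathEdges (hp : IsDiPath E a b p) {e : α × α} (he : e ∈ pathEdges p) :
    E e.1 e.2 := by
  induction hp using IsDiPath.induction with
  | singleton => simp [pathEdges] at he
  | cons a c q hac _ hq ih =>
    rcases hq.mem_pathEdges_cons.1 he with rfl | he
    exacts [hac, ih he]

end IsDiPath

end DiPath

section Leaves

/-- The vertices of a graph on `V` after attaching a pendant leaf to each vertex satisfying `P`:
`Sum.inl v` is an original vertex, `Sum.inr v` the leaf attached to `v`. -/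
abbrev WithLeaves {V : Type*} (P : V → Prop) := V ⊕ {v : V // P v}

variable {V : Type*} {P : V → Prop} {E : V → V → Prop}

namespace WithLeaves

/-- The original vertex underlying a vertex of `WithLeaves P`: a leaf is sent to the vertex it is
attached to. -/
def base : WithLeaves P → V := Sum.elim id Subtype.val

variable (P) in
/-- The vertex that inherits the capacity of `v`: the leaf attached to `v` if there is one, and
`v` itself otherwise. -/
noncomputable def tip (v : V) : WithLeaves P := if h : P v then .inr ⟨v, h⟩ else .inl v

theorem tip_of_pos {v : V} (hv : P v) : tip P v = .inr ⟨v, hv⟩ := dif_pos hv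

theorem tip_of_neg {v : V} (hv : ¬P v) : tip P v = .inl v := dif_neg hv

theorem base_tip (v : V) : (tip P v).base = v := by
  unfold tip; split_ifs <;> rfl

theorem base_eq_iff_of_pos {v : V} (hv : P v) {x : WithLeaves P} :
    x.base = v ↔ x = .inl v ∨ x = .inr ⟨v, hv⟩ := by
  rcases x with x | x <;> simp [base, Subtype.ext_iff]

theorem base_eq_iff_of_neg {v : V} (hv : ¬P v) {x : WithLeaves P} :
    x.base = v ↔ x = .inl v := by
  rcases x with x | ⟨x, hx⟩
  · simp [base]
  · simpa [base] using fun h : x = v => hv (h ▸ hx)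

end WithLeaves

open WithLeaves

variable (P E) in
/-- The edge relation obtained from `E` by joining each vertex satisfying `P` to its pendant leaf
in both directions. -/
inductive LeafAdj : WithLeaves P → WithLeaves P → Prop
  | ofBase {a b : V} (h : E a b) : LeafAdj (.inl a) (.inl b)
  | toLeaf (v : {v : V // P v}) : LeafAdj (.inl v.1) (.inr v)
  | ofLeaf (v : {v : V // P v}) : LeafAdj (.inr v) (.inl v.1)

/-- The original vertices visited by a list of vertices of `WithLeaves P`. -/
def basePath (q : List (WithLeaves P)) : List V := q.filterMap Sum.getLeft?

theorem basePath_nil : basePath ([] : List (WithLeaves P)) = [] := rfl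

theorem basePath_inl_cons (v : V) (q : List (WithLeaves P)) :
    basePath (.inl v :: q) = v :: basePath q := rfl

theorem basePath_inr_cons (v : {v : V // P v}) (q : List (WithLeaves P)) :
    basePath (.inr v :: q) = basePath q := rfl

/-- A path `q` in the graph with leaves traverses the same original edges as the path `p`. -/
def SameBaseEdges (q : List (WithLeaves P)) (p : List V) : Prop :=
  ∀ x y, (Sum.inl x, Sum.inl y) ∈ pathEdges q ↔ (x, y) ∈ pathEdges p

theorem SameBaseEdges.singleton (x : WithLeaves P) (v : V) : SameBaseEdges [x] [v] := by
  simp [SameBaseEdges, pathEdges]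

theorem IsDiPath.eq_singleton_or_eq_cons_of_leaf {v : {v : V // P v}} {y : WithLeaves P}
    {q : List (WithLeaves P)} (hq : IsDiPath (LeafAdj P E) (.inr v) y q) :
    (Sum.inr v = y ∧ q = [.inr v]) ∨
      ∃ r, q = .inr v :: r ∧ IsDiPath (LeafAdj P E) (.inl v.1) y r := by
  refine hq.eq_singleton_or_eq_cons.imp_right ?_
  rintro ⟨-, r, rfl, ⟨⟩, -, hr⟩
  exact ⟨r, rfl, hr⟩

theorem IsDiPath.eq_singleton_of_leaf {v : {v : V // P v}} {y : WithLeaves P}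
    {q : List (WithLeaves P)} (hq : IsDiPath (LeafAdj P E) (.inr v) y q) (hv : .inl v.1 ∉ q) :
    .inr v = y ∧ q = [.inr v] := by
  rcases hq.eq_singleton_or_eq_cons_of_leaf with h | ⟨r, rfl, hr⟩
  · exact h
  · exact absurd (List.mem_cons_of_mem _ (List.mem_of_head? hr.1)) hv

theorem IsDiPath.sameBaseEdges_basePath {x y : WithLeaves P} {q : List (WithLeaves P)}
    (hq : IsDiPath (LeafAdj P E) x y q) : SameBaseEdges q (basePath q) := by
  induction hq using IsDiPath.induction with
  | singleton =>
    rcases y with v | v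
    · exact .singleton _ v
    · simp [SameBaseEdges, basePath_inr_cons, basePath_nil, pathEdges]
  | cons x c q hxc hx hq ih =>
    intro u w
    rw [hq.mem_pathEdges_cons, ih u w]
    rcases hxc with @⟨a, b, -⟩ | v | v
    · rcases hq.eq_singleton_or_eq_cons with ⟨-, rfl⟩ | ⟨-, r, rfl, -⟩ <;>
        simp [basePath_inl_cons, basePath_nil, pathEdges]
    · obtain ⟨-, rfl⟩ := hq.eq_singleton_of_leaf hx
      simp [basePath_inl_cons, basePath_inr_cons, basePath_nil, pathEdges]
    · simp [basePath_inr_cons]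

theorem IsDiPath.basePath_of_inl {a : V} {y : WithLeaves P} {q : List (WithLeaves P)}
    (hq : IsDiPath (LeafAdj P E) (.inl a) y q) : IsDiPath E a y.base (basePath q) := by
  generalize hx : (Sum.inl a : WithLeaves P) = x at hq
  induction hq using IsDiPath.induction generalizing a with
  | singleton => subst hx; exact .singleton a
  | cons x c q hxc hxq hq ih =>
    rcases hxc with ⟨hab⟩ | v | v
    · obtain rfl := Sum.inl.inj hx
      exact (ih rfl).cons hab (by simpa [basePath] using hxq)
    · obtain rfl := Sum.inl.inj hx
      obtain ⟨rfl, rfl⟩ := hq.eq_singleton_of_leaf hxq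
      exact .singleton v.1
    · simp at hx

theorem IsDiPath.exists_base {x y : WithLeaves P} {q : List (WithLeaves P)}
    (hq : IsDiPath (LeafAdj P E) x y q) :
    ∃ p, IsDiPath E x.base y.base p ∧ SameBaseEdges q p := by
  rcases x with a | v
  · exact ⟨basePath q, hq.basePath_of_inl, hq.sameBaseEdges_basePath⟩
  · rcases hq.eq_singleton_or_eq_cons_of_leaf with ⟨rfl, rfl⟩ | ⟨r, rfl, hr⟩
    · exact ⟨[v.1], .singleton v.1, .singleton _ _⟩
    · exact ⟨basePath r, hr.basePath_of_inl, hq.sameBaseEdges_basePath⟩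

theorem IsDiPath.exists_lift_end {a b : V} {p : List V} (hp : IsDiPath E a b p) :
    ∃ q, IsDiPath (LeafAdj P E) (.inl a) (tip P b) q ∧ basePath q = p ∧
      ∀ v, .inr v ∈ q → v.1 = b := by
  have hmap : IsDiPath (LeafAdj P E) (.inl a) (.inl b) (p.map .inl) :=
    hp.map Sum.inl_injective fun _ _ => .ofBase
  have hbase : basePath (p.map .inl : List (WithLeaves P)) = p :=
    List.filterMap_map.trans List.filterMap_some
  by_cases hb : P b
  · rw [tip_of_pos hb]
    refine ⟨p.map .inl ++ [.inr ⟨b, hb⟩], hmap.concat (.toLeaf ⟨b, hb⟩) (by simp), ?_, ?_⟩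
    · rw [basePath, List.filterMap_append]
      exact (List.append_nil _).trans hbase
    · simp +contextual
  · rw [tip_of_neg hb]
    exact ⟨p.map .inl, hmap, hbase, by simp⟩

theorem IsDiPath.exists_lift {a b : V} {p : List V} (hp : IsDiPath E a b p) :
    ∃ q, IsDiPath (LeafAdj P E) (tip P a) (tip P b) q ∧ SameBaseEdges q p := by
  rcases eq_or_ne a b with rfl | hab
  · rw [hp.eq_singleton]
    exact ⟨[tip P a], .singleton _, .singleton _ _⟩
  suffices ∃ q, IsDiPath (LeafAdj P E) (tip P a) (tip P b) q ∧ basePath q = p by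
    obtain ⟨q, hq, rfl⟩ := this
    exact ⟨q, hq, hq.sameBaseEdges_basePath⟩
  obtain ⟨q, hq, hbase, hleaf⟩ := hp.exists_lift_end (P := P)
  by_cases ha : P a
  · rw [tip_of_pos ha]
    exact ⟨.inr ⟨a, ha⟩ :: q, hq.cons (.ofLeaf ⟨a, ha⟩) fun h => hab (hleaf _ h), hbase⟩
  · rw [tip_of_neg ha]
    exact ⟨q, hq, hbase⟩

theorem SameBaseEdges.sum_pathEdges [DecidableEq V] {M : Type*} [AddCommMonoid M]
    {q : List (WithLeaves P)} {p : List V} (hqp : SameBaseEdges q p)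
    {f : V × V → M} {g : WithLeaves P × WithLeaves P → M}
    (hbase : ∀ x y, g (.inl x, .inl y) = f (x, y))
    (hzero : ∀ e ∈ pathEdges q, (∀ x y, e ≠ (.inl x, .inl y)) → g e = 0) :
    ∑ e ∈ (pathEdges q).toFinset, g e = ∑ e ∈ (pathEdges p).toFinset, f e := by
  refine (Finset.sum_of_injOn (Prod.map .inl .inl)
    (Sum.inl_injective.prodMap Sum.inl_injective).injOn ?_ ?_ ?_).symm
  · rintro ⟨x, y⟩ hxy
    simpa using (hqp x y).2 (by simpa using hxy)
  · intro e he hne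
    rw [List.mem_toFinset] at he
    refine hzero e he ?_
    rintro x y rfl
    exact hne ⟨(x, y), by simpa using (hqp x y).1 he, rfl⟩
  · rintro ⟨x, y⟩ -
    exact (hbase x y).symm

/-- The edge set `ES` enlarged by the edges between each vertex satisfying `P` and its leaf. -/
def leafEdges [Fintype V] [DecidableEq V] (P : V → Prop) [DecidablePred P]
    (ES : Finset (V × V)) : Finset (WithLeaves P × WithLeaves P) :=
  ES.image (fun e => (Sum.inl e.1, Sum.inl e.2)) ∪
    Finset.univ.image (fun v : {v : V // P v} => (Sum.inl v.1, Sum.inr v)) ∪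
    Finset.univ.image (fun v : {v : V // P v} => (Sum.inr v, Sum.inl v.1))

theorem mem_leafEdges [Fintype V] [DecidableEq V] [DecidablePred P] {ES : Finset (V × V)}
    {x y : WithLeaves P} :
    (x, y) ∈ leafEdges P ES ↔ LeafAdj P (fun a b => (a, b) ∈ ES) x y := by
  constructor
  · intro h
    simp only [leafEdges, Finset.mem_union, Finset.mem_image, Finset.mem_univ, true_and] at h
    rcases h with (⟨e, he, ⟨⟩⟩ | ⟨v, ⟨⟩⟩) | ⟨v, ⟨⟩⟩
    exacts [.ofBase he, .toLeaf v, .ofLeaf v]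
  · rintro (h | v | v) <;> simp_all [leafEdges]

end Leaves

section Instances

variable {VS VR : Type*} {τ : ℕ}

/-- The total demand that the mapping places on the substrate node `v`. -/
noncomputable def Mapping.nodeLoad [Fintype VR] [DecidableEq VS] (I : VNEP VS VR τ)
    (M : Mapping VS VR) (v : VS) (t : Fin τ) : ℝ≥0 :=
  ∑ w ∈ Finset.univ.filter (fun w => M.mV w = v), I.dRv w t

/-- The total demand that the mapping places on the substrate edge `e`. -/
noncomputable def Mapping.edgeLoad [DecidableEq VS] (I : VNEP VS VR τ)
    (M : Mapping VS VR) (e : VS × VS) (t : Fin τ) : ℝ≥0 :=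
  ∑ eR ∈ I.ER.filter (fun eR => e ∈ pathEdges (M.mE eR)), I.dRe eR t

theorem Mapping.feasible_iff [Fintype VR] [DecidableEq VS] {I : VNEP VS VR τ}
    {M : Mapping VS VR} :
    M.Feasible I ↔ M.Valid I ∧ (∀ v t, (M.nodeLoad I v t : ℝ≥0∞) ≤ I.dSv v t) ∧
      ∀ e ∈ I.ES, ∀ t, (M.edgeLoad I e t : ℝ≥0∞) ≤ I.dSe e t :=
  Iff.rfl

/-- The neighbours of a substrate node, ignoring edge directions; their number is the degree. -/
def VNEP.neighbors [Fintype VS] [DecidableEq VS] (I : VNEP VS VR τ) (v : VS) : Finset VS :=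
  Finset.univ.filter fun u => (v, u) ∈ I.ES ∨ (u, v) ∈ I.ES

theorem RTree.exists_isChild_of_two_le_degree [Fintype VS] [DecidableEq VS] (T : RTree VS)
    {I : VNEP VS VR τ} (hES : I.ES = T.edges) {v : VS} (hv : 2 ≤ (I.neighbors v).card) :
    ∃ u, T.IsChild u v := by
  obtain ⟨u, hu, hne⟩ := Finset.exists_mem_ne hv (T.parent v)
  simp only [VNEP.neighbors, hES, RTree.edges, Finset.mem_filter, Finset.mem_univ,
    true_and] at hu
  rcases hu with ⟨hvu, hparent | hchild⟩ | ⟨huv, hchild | hparent⟩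
  exacts [absurd hparent.symm hne, ⟨u, hvu.symm, hchild⟩, ⟨u, huv, hchild⟩,
    absurd hparent.symm hne]

end Instances

/-- `It` arises from `I` by attaching a pendant leaf to each substrate node satisfying `P` and
moving the capacity and cost of that node to its leaf. Capacities and costs of pairs of nodes that
are not edges of `It` are left unspecified. -/
structure VNEP.IsLeafTransform {VS VR : Type*} [Fintype VS] [DecidableEq VS] {τ : ℕ}
    (P : VS → Prop) [DecidablePred P] (I : VNEP VS VR τ) (It : VNEP (WithLeaves P) VR τ) :
    Prop where
  ES_eq : It.ES = leafEdges P I.ES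
  ER_eq : It.ER = I.ER
  dRv_eq : It.dRv = I.dRv
  dRe_eq : It.dRe = I.dRe
  dSv_eq : It.dSv = Sum.elim (fun v => if P v then 0 else I.dSv v) (fun v' => I.dSv v'.1)
  cSv_eq : It.cSv = Sum.elim I.cSv (fun v' => I.cSv v'.1)
  dSe_inl_inl : ∀ x y, It.dSe (.inl x, .inl y) = I.dSe (x, y)
  cSe_inl_inl : ∀ x y, It.cSe (.inl x, .inl y) = I.cSe (x, y)
  dSe_leaf : ∀ v' : {v : VS // P v},
    It.dSe (.inl v'.1, .inr v') = ⊤ ∧ It.dSe (.inr v', .inl v'.1) = ⊤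
  cSe_leaf : ∀ v' : {v : VS // P v},
    It.cSe (.inl v'.1, .inr v') = 0 ∧ It.cSe (.inr v', .inl v'.1) = 0

/-- `M'` maps into the substrate with leaves, and collapsing each leaf onto the node it is attached
to gives `M`, as far as nodes and the request edges in `ER` are concerned. -/
structure Mapping.CollapsesTo {VS VR : Type*} {P : VS → Prop} (ER : Finset (VR × VR))
    (M' : Mapping (WithLeaves P) VR) (M : Mapping VS VR) : Prop where
  mV_eq : ∀ w, M.mV w = (M'.mV w).base
  mE_iff : ∀ e ∈ ER, SameBaseEdges (M'.mE e) (M.mE e)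

namespace VNEP.IsLeafTransform

variable {VS VR : Type*} [Fintype VS] [DecidableEq VS] {τ : ℕ} {P : VS → Prop} [DecidablePred P]
  {I : VNEP VS VR τ} {It : VNEP (WithLeaves P) VR τ} {M : Mapping VS VR}
  {M' : Mapping (WithLeaves P) VR}

open WithLeaves

theorem mem_ES (h : IsLeafTransform P I It) {x y : WithLeaves P} :
    (x, y) ∈ It.ES ↔ LeafAdj P (fun a b => (a, b) ∈ I.ES) x y := by
  rw [h.ES_eq, mem_leafEdges]

theorem dSv_inl_of_pos (h : IsLeafTransform P I It) {v : VS} (hv : P v) :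
    It.dSv (.inl v) = 0 := by
  simp [h.dSv_eq, hv]

theorem dSv_inl_of_neg (h : IsLeafTransform P I It) {v : VS} (hv : ¬P v) :
    It.dSv (.inl v) = I.dSv v := by
  simp [h.dSv_eq, hv]

theorem dSv_inr (h : IsLeafTransform P I It) (v : {v : VS // P v}) :
    It.dSv (.inr v) = I.dSv v.1 := by
  simp [h.dSv_eq]

theorem neighbors_inl_of_neg (h : IsLeafTransform P I It) {v : VS} (hv : ¬P v) :
    It.neighbors (.inl v) = (I.neighbors v).map .inl := by
  ext y
  simp only [neighbors, h.mem_ES, Finset.mem_filter, Finset.mem_univ, true_and, Finset.mem_map,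
    Function.Embedding.inl_apply]
  constructor
  · rintro ((hvu | v' | _) | (huv | _ | v'))
    exacts [⟨_, .inl hvu, rfl⟩, absurd v'.2 hv, ⟨_, .inr huv, rfl⟩, absurd v'.2 hv]
  · rintro ⟨u, hvu | huv, rfl⟩
    exacts [.inl (.ofBase hvu), .inr (.ofBase huv)]

theorem neighbors_inr_subset (h : IsLeafTransform P I It) (v : {v : VS // P v}) :
    It.neighbors (.inr v) ⊆ {.inl v.1} := by
  intro y hy
  simp only [neighbors, h.mem_ES, Finset.mem_filter, Finset.mem_univ, true_and] at hy
  rcases hy with hadj | hadj <;> cases hadj <;> exact Finset.mem_singleton_self _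

theorem dSv_eq_zero_of_two_le_degree (h : IsLeafTransform P I It)
    (hP : ∀ v, 2 ≤ (I.neighbors v).card → P v) {x : WithLeaves P}
    (hx : 2 ≤ (It.neighbors x).card) : It.dSv x = 0 := by
  rcases x with v | v
  · refine h.dSv_inl_of_pos (by_contra fun hv => hv (hP v ?_))
    rwa [h.neighbors_inl_of_neg hv, Finset.card_map] at hx
  · have hle : (It.neighbors (.inr v)).card ≤ 1 := Finset.card_le_card (h.neighbors_inr_subset v)
    omega

theorem exists_valid_collapse (h : IsLeafTransform P I It) (hM' : M'.Valid It) :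
    ∃ M : Mapping VS VR, M.Valid I ∧ M'.CollapsesTo I.ER M := by
  simp only [Mapping.Valid, h.mem_ES, h.ER_eq] at hM'
  choose! p hp hsame using fun e he => (hM' e he).exists_base
  exact ⟨⟨fun w => (M'.mV w).base, p⟩, hp, fun _ => rfl, hsame⟩

theorem exists_valid_lift (h : IsLeafTransform P I It) (hM : M.Valid I) :
    ∃ M' : Mapping (WithLeaves P) VR,
      M'.Valid It ∧ M'.CollapsesTo I.ER M ∧ ∀ w, M'.mV w = tip P (M.mV w) := by
  choose! q hq hsame using fun e he => (hM e he).exists_lift (P := P)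
  refine ⟨⟨fun w => tip P (M.mV w), q⟩, ?_, ⟨fun w => (base_tip _).symm, hsame⟩, fun _ => rfl⟩
  simpa only [Mapping.Valid, h.mem_ES, h.ER_eq] using hq

theorem edgeLoad_inl_inl (h : IsLeafTransform P I It) (hc : M'.CollapsesTo I.ER M) (x y : VS)
    (t : Fin τ) : M'.edgeLoad It (.inl x, .inl y) t = M.edgeLoad I (x, y) t := by
  unfold Mapping.edgeLoad
  rw [h.ER_eq, h.dRe_eq]
  refine Finset.sum_congr (Finset.ext fun e => ?_) fun _ _ => rfl
  simpa only [Finset.mem_filter] using and_congr_right fun he => hc.mE_iff e he x y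

theorem edgeLoad_le_iff (h : IsLeafTransform P I It) (hc : M'.CollapsesTo I.ER M) :
    (∀ e ∈ It.ES, ∀ t, (M'.edgeLoad It e t : ℝ≥0∞) ≤ It.dSe e t) ↔
      ∀ e ∈ I.ES, ∀ t, (M.edgeLoad I e t : ℝ≥0∞) ≤ I.dSe e t := by
  constructor
  · rintro hle ⟨x, y⟩ hxy t
    simpa only [h.edgeLoad_inl_inl hc, h.dSe_inl_inl] using
      hle (.inl x, .inl y) (h.mem_ES.2 (.ofBase hxy)) t
  · rintro hle ⟨x, y⟩ hxy t
    rcases h.mem_ES.1 hxy with hab | v | v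
    · simpa only [h.edgeLoad_inl_inl hc, h.dSe_inl_inl] using hle _ hab t
    · simp [(h.dSe_leaf v).1]
    · simp [(h.dSe_leaf v).2]

variable [Fintype VR]

theorem nodeLoad_of_pos (h : IsLeafTransform P I It) (hc : M'.CollapsesTo I.ER M) {v : VS}
    (hv : P v) (t : Fin τ) :
    M.nodeLoad I v t = M'.nodeLoad It (.inl v) t + M'.nodeLoad It (.inr ⟨v, hv⟩) t := by
  simp only [Mapping.nodeLoad, hc.mV_eq, base_eq_iff_of_pos hv, h.dRv_eq, Finset.filter_or]
  refine Finset.sum_union (Finset.disjoint_filter.2 fun w _ hl hr => ?_)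
  exact Sum.inl_ne_inr (hl.symm.trans hr)

theorem nodeLoad_of_neg (h : IsLeafTransform P I It) (hc : M'.CollapsesTo I.ER M) {v : VS}
    (hv : ¬P v) (t : Fin τ) : M.nodeLoad I v t = M'.nodeLoad It (.inl v) t := by
  simp only [Mapping.nodeLoad, hc.mV_eq, base_eq_iff_of_neg hv, h.dRv_eq]

theorem feasible_collapse (h : IsLeafTransform P I It) (hc : M'.CollapsesTo I.ER M)
    (hval : M.Valid I) (hM' : M'.Feasible It) : M.Feasible I := by
  obtain ⟨-, hnode, hedge⟩ := Mapping.feasible_iff.1 hM'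
  refine Mapping.feasible_iff.2 ⟨hval, fun v t => ?_, (h.edgeLoad_le_iff hc).1 hedge⟩
  by_cases hv : P v
  · calc (M.nodeLoad I v t : ℝ≥0∞)
        = M'.nodeLoad It (.inl v) t + M'.nodeLoad It (.inr ⟨v, hv⟩) t := by
          rw [h.nodeLoad_of_pos hc hv, ENNReal.coe_add]
      _ ≤ It.dSv (.inl v) t + It.dSv (.inr ⟨v, hv⟩) t := add_le_add (hnode _ t) (hnode _ t)
      _ = I.dSv v t := by rw [h.dSv_inl_of_pos hv, h.dSv_inr, Pi.zero_apply, zero_add]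
  · rw [h.nodeLoad_of_neg hc hv, ← h.dSv_inl_of_neg hv]
    exact hnode _ t

theorem feasible_lift (h : IsLeafTransform P I It) (hc : M'.CollapsesTo I.ER M)
    (htip : ∀ w, M'.mV w = tip P (M.mV w)) (hval : M'.Valid It) (hM : M.Feasible I) :
    M'.Feasible It := by
  obtain ⟨-, hnode, hedge⟩ := Mapping.feasible_iff.1 hM
  refine Mapping.feasible_iff.2 ⟨hval, fun x t => ?_, (h.edgeLoad_le_iff hc).2 hedge⟩
  rcases x with v | v
  · by_cases hv : P v
    · have hunused : ∀ w, M'.mV w ≠ .inl v := by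
        intro w hw
        have hMw : M.mV w = v := by rw [hc.mV_eq, hw]; rfl
        rw [htip, hMw, tip_of_pos hv] at hw
        exact Sum.inr_ne_inl hw
      simp [Mapping.nodeLoad, hunused]
    · rw [← h.nodeLoad_of_neg hc hv, h.dSv_inl_of_neg hv]
      exact hnode v t
  · rw [h.dSv_inr]
    refine le_trans ?_ (hnode v t)
    rw [ENNReal.coe_le_coe, h.nodeLoad_of_pos hc v.2]
    exact le_add_self

theorem cost_eq (h : IsLeafTransform P I It) (hc : M'.CollapsesTo I.ER M) (hval : M'.Valid It) :
    M'.cost It = M.cost I := by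
  have hnode : ∀ w, It.cSv (M'.mV w) = I.cSv (M.mV w) := by
    intro w
    rw [h.cSv_eq, hc.mV_eq]
    rcases M'.mV w with v | v <;> rfl
  unfold Mapping.cost
  simp only [h.ER_eq, h.dRv_eq, h.dRe_eq, hnode]
  congr 1
  refine Finset.sum_congr rfl fun e he => (hc.mE_iff e he).sum_pathEdges ?_ ?_
  · simp only [h.cSe_inl_inl, implies_true]
  · rintro ⟨x, y⟩ hxy hne
    have hadj := h.mem_ES.1 ((hval e (h.ER_eq ▸ he)).rel_of_mem_pathEdges hxy)
    rcases hadj with - | v | v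
    · exact absurd rfl (hne _ _)
    · simp [(h.cSe_leaf v).1]
    · simp [(h.cSe_leaf v).2]

theorem exists_feasible_cost_le_iff (h : IsLeafTransform P I It) (k : ℝ≥0) :
    (∃ M : Mapping VS VR, M.Feasible I ∧ M.cost I ≤ k) ↔
      ∃ M' : Mapping (WithLeaves P) VR, M'.Feasible It ∧ M'.cost It ≤ k := by
  constructor
  · rintro ⟨M, hM, hk⟩
    obtain ⟨M', hval, hc, htip⟩ := h.exists_valid_lift hM.1
    exact ⟨M', h.feasible_lift hc htip hval hM, (h.cost_eq hc hval).trans_le hk⟩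
  · rintro ⟨M', hM', hk⟩
    obtain ⟨M, hval, hc⟩ := h.exists_valid_collapse hM'.1
    exact ⟨M, h.feasible_collapse hc hval hM', (h.cost_eq hc hM'.1).symm.trans_le hk⟩

end VNEP.IsLeafTransform

theorem leaf_transformation_correct_general {VS VR : Type*} [Fintype VS] [DecidableEq VS]
    [Fintype VR] {τ : ℕ} {P : VS → Prop} [DecidablePred P] {I : VNEP VS VR τ}
    {It : VNEP (WithLeaves P) VR τ} (h : I.IsLeafTransform P It)
    (hP : ∀ v, 2 ≤ (I.neighbors v).card → P v) :
    (∀ x, 2 ≤ (It.neighbors x).card → It.dSv x = 0) ∧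
      ∀ k : ℝ≥0, (∃ M : Mapping VS VR, M.Feasible I ∧ M.cost I ≤ k) ↔
        ∃ M' : Mapping (WithLeaves P) VR, M'.Feasible It ∧ M'.cost It ≤ k :=
  ⟨fun _ => h.dSv_eq_zero_of_two_le_degree hP, h.exists_feasible_cost_le_iff⟩

/-- Lemma 3.1 of the paper (pushing capacities to leaves): let `I` be a VNEP instance whose
substrate is the bidirectional tree given by the rooted tree `T`, and let `Ĩ` (`It`) be the
instance obtained by adding, for every node `v` having at least one child, a fresh leaf `v′`
(modelled as `Sum.inr ⟨v, _⟩`) with both directed edges between `v` and `v′`, moving the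
capacity of `v` to `v′` (setting the capacity of `v` to `0`), giving `v′` the cost of `v`,
giving the new edges capacity `∞` and cost `0`, and leaving all other data unchanged.
Then every node of the new substrate of degree at least two has capacity `0`, and for every
`k`, `I` has a feasible mapping of cost at most `k` iff `Ĩ` does. -/
theorem leaf_transformation_correct {VS VR : Type*} [Fintype VS] [DecidableEq VS]
    [Fintype VR] [DecidableEq VR] {τ : ℕ} (T : RTree VS) (I : VNEP VS VR τ)
    (hES : I.ES = T.edges)
    (It : VNEP (VS ⊕ {v : VS // ∃ u, T.IsChild u v}) VR τ)
    (hES' : It.ES =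
      I.ES.image (fun e => (Sum.inl e.1, Sum.inl e.2)) ∪
      Finset.univ.image (fun v' : {v : VS // ∃ u, T.IsChild u v} =>
        ((Sum.inl v'.1, Sum.inr v') : _ × _)) ∪
      Finset.univ.image (fun v' : {v : VS // ∃ u, T.IsChild u v} =>
        ((Sum.inr v', Sum.inl v'.1) : _ × _)))
    (hER : It.ER = I.ER) (hdRv : It.dRv = I.dRv) (hdRe : It.dRe = I.dRe)
    (hdSv : It.dSv =
      Sum.elim (fun v => if ∃ u, T.IsChild u v then 0 else I.dSv v) (fun v' => I.dSv v'.1))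
    (hcSv : It.cSv = Sum.elim I.cSv (fun v' => I.cSv v'.1))
    (hdSeOld : ∀ x y : VS, It.dSe (Sum.inl x, Sum.inl y) = I.dSe (x, y))
    (hcSeOld : ∀ x y : VS, It.cSe (Sum.inl x, Sum.inl y) = I.cSe (x, y))
    (hdSeNew : ∀ v' : {v : VS // ∃ u, T.IsChild u v},
      It.dSe (Sum.inl v'.1, Sum.inr v') = ⊤ ∧ It.dSe (Sum.inr v', Sum.inl v'.1) = ⊤)
    (hcSeNew : ∀ v' : {v : VS // ∃ u, T.IsChild u v},
      It.cSe (Sum.inl v'.1, Sum.inr v') = 0 ∧ It.cSe (Sum.inr v', Sum.inl v'.1) = 0) :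
    (∀ x : VS ⊕ {v : VS // ∃ u, T.IsChild u v},
      2 ≤ (Finset.univ.filter (fun y => (x, y) ∈ It.ES ∨ (y, x) ∈ It.ES)).card →
        It.dSv x = 0) ∧
    (∀ k : ℝ≥0,
      (∃ M : Mapping VS VR, M.Feasible I ∧ M.cost I ≤ k) ↔
      (∃ M' : Mapping (VS ⊕ {v : VS // ∃ u, T.IsChild u v}) VR,
        M'.Feasible It ∧ M'.cost It ≤ k)) :=
  leaf_transformation_correct_general
    ⟨hES', hER, hdRv, hdRe, hdSv, hcSv, hdSeOld, hcSeOld, hdSeNew, hcSeNew⟩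
    fun _ => T.exists_isChild_of_two_le_degree hES
end

section
/- Let I = (G_S, G_R, d_R, d_S, c_S) be a VNEP instance whose substrate G_S is a bidirectional tree rooted at p, and let v ∈ V_S be a node with children u_1, …, u_t where t > 2. Let Ĩ be obtained from I by the single split step: add two fresh nodes v_ℓ and v_r with d̃_S(v_ℓ) = d̃_S(v_r) = 0 and c̃_S(v_ℓ) = c̃_S(v_r) = 0; with s = ⌊t/2⌋, replace each pair of edges (v, u_i), (u_i, v) for i ≤ s by (v_ℓ, u_i), (u_i, v_ℓ) and for i > s by (v_r, u_i), (u_i, v_r), keeping their capacities and costs; add the edges (v, v_ℓ), (v_ℓ, v), (v, v_r), (v_r, v), each of capacity ∞ and cost 0; all other data is unchanged. Then the substrate of Ĩ is again a bidirectional tree, and for every k ∈ ℝ≥0: I has a feasible mapping of cost at most k if and only if Ĩ has a feasible mapping of cost at most k. (Iterating this step turns any tree substrate into a binary tree substrate of an equivalent instance.) -/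
open scoped BigOperators NNReal ENNReal Classical

/-- The directed edge set (both orientations of every parent-child pair) induced by a
parent function. -/
noncomputable def edgesOf {V : Type*} [Fintype V] [DecidableEq V] (par : V → V) :
    Finset (V × V) :=
  Finset.univ.filter fun e => e.1 ≠ e.2 ∧ (par e.1 = e.2 ∨ par e.2 = e.1)

/-- The parent function after the split step at `v` with children `u 0, …, u (t-1)`: the two
fresh nodes `v_ℓ = Sum.inr false` and `v_r = Sum.inr true` become children of `v`; the first
`⌊t/2⌋` children of `v` become children of `v_ℓ` and the remaining ones children of `v_r`;
everything else is unchanged. -/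
noncomputable def splitParent {VS : Type*} (T : RTree VS) (v : VS) {t : ℕ}
    (u : Fin t → VS) : VS ⊕ Bool → VS ⊕ Bool
  | Sum.inl w =>
      if ∃ i : Fin t, (i : ℕ) < t / 2 ∧ u i = w then Sum.inr false
      else if ∃ i : Fin t, t / 2 ≤ (i : ℕ) ∧ u i = w then Sum.inr true
      else Sum.inl (T.parent w)
  | Sum.inr _ => Sum.inl v

/-!
Contracting the two fresh nodes onto `v` turns the split tree back into the original one. The edges
contracted in this way cost nothing and have infinite capacity, and the surviving edges correspond
one-to-one, with equal costs and capacities, to those of the original tree. A path is therefore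
contracted by dropping its free edges and lifted by inserting free edges, and neither operation
changes which non-free edges are used.
-/

section DirectedPaths

variable {α : Type*} {E E' : α → α → Prop} {a b c : α} {p : List α}

theorem isChain_iff_forall_mem_pathEdges :
    List.IsChain E p ↔ ∀ e ∈ pathEdges p, E e.1 e.2 := by
  induction p with
  | nil => simp [pathEdges]
  | cons a p ih =>
    cases p with
    | nil => simp [pathEdges]
    | cons b q => rw [List.isChain_cons_cons, ih]; simp [pathEdges]

theorem IsDiPath.rel_of_mem_pathEdges_s2 (hp : IsDiPath E a b p) :
    ∀ e ∈ pathEdges p, E e.1 e.2 :=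
  isChain_iff_forall_mem_pathEdges.1 hp.2.2.1

theorem IsDiPath.of_forall_mem_pathEdges (hp : IsDiPath E a b p)
    (hE' : ∀ e ∈ pathEdges p, E' e.1 e.2) : IsDiPath E' a b p :=
  ⟨hp.1, hp.2.1, isChain_iff_forall_mem_pathEdges.2 hE', hp.2.2.2⟩

theorem IsDiPath.reflTransGen_pathEdges (hp : IsDiPath E a b p) :
    Relation.ReflTransGen (fun x y => (x, y) ∈ pathEdges p) a b := by
  obtain ⟨hhead, hlast, -, -⟩ := hp
  obtain ⟨q, rfl⟩ := List.head?_eq_some_iff.1 hhead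
  refine List.relationReflTransGen_of_exists_isChain_cons q
    (isChain_iff_forall_mem_pathEdges.2 fun _ he => he) ?_
  simpa [List.getLast?_eq_some_getLast] using hlast

theorem IsDiPath.exists_cons (hab : E a b) (hp : IsDiPath E b c p) :
    ∃ q, IsDiPath E a c q := by
  obtain ⟨hhead, hlast, hchain, hnodup⟩ := hp
  change List.IsChain E p at hchain
  by_cases ha : a ∈ p
  · obtain ⟨s, q, rfl⟩ := List.append_of_mem ha
    refine ⟨a :: q, rfl, ?_, (List.isChain_append.1 hchain).2.1, (List.nodup_append.1 hnodup).2.1⟩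
    rw [← hlast, List.getLast?_append_of_ne_nil _ (List.cons_ne_nil a q)]
  · obtain ⟨q, rfl⟩ := List.head?_eq_some_iff.1 hhead
    refine ⟨a :: b :: q, rfl, ?_, List.isChain_cons_cons.2 ⟨hab, hchain⟩,
      List.nodup_cons.2 ⟨ha, hnodup⟩⟩
    rw [List.getLast?_cons_cons, hlast]

theorem exists_isDiPath_of_reflTransGen (h : Relation.ReflTransGen E a b) :
    ∃ p, IsDiPath E a b p := by
  induction h using Relation.ReflTransGen.head_induction_on with
  | refl => exact ⟨[b], rfl, rfl, List.isChain_singleton b, List.nodup_singleton b⟩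
  | head hac _ ih => exact ih.elim fun _ hp => hp.exists_cons hac

end DirectedPaths

namespace Mapping

variable {VS VR : Type*} [DecidableEq VS] {τ : ℕ}

/-- The set `m_E(e)` of substrate edges used by the request edge `e`. -/
def usedEdges (M : Mapping VS VR) (e : VR × VR) : Finset (VS × VS) :=
  (pathEdges (M.mE e)).toFinset

/-- The cumulative demand that a mapping places on a substrate edge. -/
def edgeLoad_s2 (I : VNEP VS VR τ) (M : Mapping VS VR) (eS : VS × VS) (t : Fin τ) : ℝ≥0 :=
  ∑ e ∈ I.ER with eS ∈ M.usedEdges e, I.dRe e t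

/-- The part of the cost of a mapping that is due to request edges. -/
def edgeCost (I : VNEP VS VR τ) (M : Mapping VS VR) : ℝ≥0 :=
  ∑ e ∈ I.ER, ∑ e' ∈ M.usedEdges e, ∑ t, I.dRe e t * I.cSe e' t

variable [Fintype VR]

/-- The cumulative demand that a mapping places on a substrate node. -/
def nodeLoad_s2 (I : VNEP VS VR τ) (M : Mapping VS VR) (v : VS) (t : Fin τ) : ℝ≥0 :=
  ∑ w with M.mV w = v, I.dRv w t

/-- The part of the cost of a mapping that is due to request nodes. -/
def nodeCost (I : VNEP VS VR τ) (M : Mapping VS VR) : ℝ≥0 :=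
  ∑ w, ∑ t, I.dRv w t * I.cSv (M.mV w) t

theorem nodeLoad_eq_zero_of_notMem_range (I : VNEP VS VR τ) {M : Mapping VS VR} {v : VS}
    (hv : v ∉ Set.range M.mV) (t : Fin τ) : M.nodeLoad_s2 I v t = 0 :=
  Finset.sum_eq_zero fun w hw => absurd ⟨w, (Finset.mem_filter.1 hw).2⟩ hv

theorem feasible_iff_s2 {I : VNEP VS VR τ} {M : Mapping VS VR} :
    M.Feasible I ↔ M.Valid I ∧ (∀ v t, (M.nodeLoad_s2 I v t : ℝ≥0∞) ≤ I.dSv v t) ∧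
      ∀ eS ∈ I.ES, ∀ t, (M.edgeLoad_s2 I eS t : ℝ≥0∞) ≤ I.dSe eS t := by
  simp only [Feasible, nodeLoad_s2, edgeLoad_s2, usedEdges, List.mem_toFinset]

theorem cost_eq_nodeCost_add_edgeCost (I : VNEP VS VR τ) (M : Mapping VS VR) :
    M.cost I = M.nodeCost I + M.edgeCost I :=
  rfl

end Mapping

section Contraction

variable {V V' : Type*} [DecidableEq V]

/-- The edges of the graph obtained from the edge set `A` by identifying vertices with the same
image under `π`; loops are discarded. -/
def contractEdges (π : V' → V) (A : Finset (V' × V')) : Finset (V × V) :=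
  {e ∈ A.image (Prod.map π π) | e.1 ≠ e.2}

theorem mem_contractEdges {π : V' → V} {A : Finset (V' × V')} {e : V × V} :
    e ∈ contractEdges π A ↔ ∃ f ∈ A, π f.1 ≠ π f.2 ∧ Prod.map π π f = e := by
  simp only [contractEdges, Finset.mem_filter, Finset.mem_image]
  constructor
  · rintro ⟨⟨f, hf, rfl⟩, hne⟩
    exact ⟨f, hf, hne, rfl⟩
  · rintro ⟨f, hf, hne, rfl⟩
    exact ⟨⟨f, hf, rfl⟩, hne⟩

theorem contractEdges_mono (π : V' → V) {A B : Finset (V' × V')} (h : A ⊆ B) :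
    contractEdges π A ⊆ contractEdges π B :=
  Finset.filter_subset_filter _ (Finset.image_subset_image h)

end Contraction

/-- `I` arises from `J` by contracting the fibres of `π`, all of whose edges are free. The section
`ι` picks in each fibre the node that carries the node capacity and the node cost. -/
structure VNEP.IsFreeContraction {V V' VR : Type*} [DecidableEq V] {τ : ℕ} (I : VNEP V VR τ)
    (J : VNEP V' VR τ) (π : V' → V) (ι : V → V') : Prop where
  ER_eq : J.ER = I.ER
  dRv_eq : J.dRv = I.dRv
  dRe_eq : J.dRe = I.dRe
  leftInverse : Function.LeftInverse π ι
  dSv_section : ∀ x, J.dSv (ι x) = I.dSv x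
  cSv_section : ∀ x, J.cSv (ι x) = I.cSv x
  dSv_eq_zero : ∀ y, ι (π y) ≠ y → J.dSv y = 0
  ES_eq : I.ES = contractEdges π J.ES
  injOn : Set.InjOn (Prod.map π π) {f | f ∈ J.ES ∧ π f.1 ≠ π f.2}
  dSe_map : ∀ f ∈ J.ES, π f.1 ≠ π f.2 → I.dSe (Prod.map π π f) = J.dSe f
  cSe_map : ∀ f ∈ J.ES, π f.1 ≠ π f.2 → I.cSe (Prod.map π π f) = J.cSe f
  dSe_eq_top : ∀ f ∈ J.ES, π f.1 = π f.2 → J.dSe f = ⊤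
  cSe_eq_zero : ∀ f ∈ J.ES, π f.1 = π f.2 → J.cSe f = 0
  fibre_connected : ∀ x y, π x = π y →
    Relation.ReflTransGen (fun a b => (a, b) ∈ J.ES ∧ π a = π b) x y

namespace VNEP.IsFreeContraction

variable {V V' VR : Type*} [DecidableEq V] {τ : ℕ} {I : VNEP V VR τ}
  {J : VNEP V' VR τ} {π : V' → V} {ι : V → V'}

theorem mem_contractEdges_iff (h : I.IsFreeContraction J π ι) {A : Finset (V' × V')}
    (hA : A ⊆ J.ES) {f : V' × V'} (hf : f ∈ J.ES) (hne : π f.1 ≠ π f.2) :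
    Prod.map π π f ∈ contractEdges π A ↔ f ∈ A := by
  refine mem_contractEdges.trans ⟨?_, fun hfA => ⟨f, hfA, hne, rfl⟩⟩
  rintro ⟨g, hgA, hgne, hgf⟩
  rwa [← h.injOn ⟨hA hgA, hgne⟩ ⟨hf, hne⟩ hgf]

theorem sum_mul_cSe_contractEdges (h : I.IsFreeContraction J π ι) {A : Finset (V' × V')}
    (hA : A ⊆ J.ES) (d : Fin τ → ℝ≥0) :
    ∑ e ∈ contractEdges π A, ∑ t, d t * I.cSe e t = ∑ f ∈ A, ∑ t, d t * J.cSe f t := by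
  have hfree : ∑ f ∈ A with ¬ π f.1 ≠ π f.2, ∑ t, d t * J.cSe f t = 0 := by
    refine Finset.sum_eq_zero fun f hf => ?_
    obtain ⟨hfA, heq⟩ := Finset.mem_filter.1 hf
    simp [h.cSe_eq_zero f (hA hfA) (not_not.1 heq)]
  have hinj : Set.InjOn (Prod.map π π) ({f ∈ A | π f.1 ≠ π f.2} : Finset _) :=
    h.injOn.mono fun f hf => (Finset.mem_filter.1 hf).imp_left fun hfA => hA hfA
  rw [← Finset.sum_filter_add_sum_filter_not A (fun f => π f.1 ≠ π f.2), hfree, add_zero,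
    contractEdges, Finset.filter_image]
  refine (Finset.sum_image hinj).trans (Finset.sum_congr rfl fun f hf => ?_)
  obtain ⟨hfA, hne⟩ := Finset.mem_filter.1 hf
  rw [h.cSe_map f (hA hfA) hne]

section Paths

variable [DecidableEq V']

theorem exists_isDiPath_contract (h : I.IsFreeContraction J π ι) {x y : V'} {p : List V'}
    (hp : IsDiPath (fun a b => (a, b) ∈ J.ES) x y p) :
    ∃ q, IsDiPath (fun a b => (a, b) ∈ I.ES) (π x) (π y) q ∧
      (pathEdges q).toFinset ⊆ contractEdges π (pathEdges p).toFinset := by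
  have hwalk : Relation.ReflTransGen
      (fun a b => (a, b) ∈ contractEdges π (pathEdges p).toFinset) (π x) (π y) := by
    refine hp.reflTransGen_pathEdges.lift' π fun a b hab => ?_
    by_cases heq : π a = π b
    · rw [Function.onFun, heq]
    · exact .single (mem_contractEdges.2 ⟨(a, b), List.mem_toFinset.2 hab, heq, rfl⟩)
  have hES : contractEdges π (pathEdges p).toFinset ⊆ I.ES := h.ES_eq ▸
    contractEdges_mono π fun e he => hp.rel_of_mem_pathEdges_s2 e (List.mem_toFinset.1 he)
  obtain ⟨q, hq⟩ := exists_isDiPath_of_reflTransGen hwalk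
  have hsub := hq.rel_of_mem_pathEdges_s2
  exact ⟨q, hq.of_forall_mem_pathEdges fun e he => hES (hsub e he),
    fun e he => hsub e (List.mem_toFinset.1 he)⟩

theorem exists_isDiPath_lift (h : I.IsFreeContraction J π ι) {x y : V'} {q : List V}
    (hq : IsDiPath (fun a b => (a, b) ∈ I.ES) (π x) (π y) q) :
    ∃ p, IsDiPath (fun a b => (a, b) ∈ J.ES) x y p ∧
      contractEdges π (pathEdges p).toFinset ⊆ (pathEdges q).toFinset := by
  let R : V' → V' → Prop := fun a b => (a, b) ∈ J.ES ∧ (π a ≠ π b → (π a, π b) ∈ pathEdges q)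
  have hfibre : ∀ x y, π x = π y → Relation.ReflTransGen R x y := fun x y hxy =>
    Relation.ReflTransGen.mono (fun _ _ hab => ⟨hab.1, fun hne => absurd hab.2 hne⟩) _ _
      (h.fibre_connected x y hxy)
  have hwalk : ∀ a, Relation.ReflTransGen (fun a b => (a, b) ∈ pathEdges q) a (π y) →
      ∀ x, π x = a → Relation.ReflTransGen R x y := by
    intro a ha
    induction ha using Relation.ReflTransGen.head_induction_on with
    | refl => exact fun x hx => hfibre x y hx
    | @head a c hac _ ih =>
      intro x hx
      have hES : (a, c) ∈ contractEdges π J.ES := h.ES_eq ▸ hq.rel_of_mem_pathEdges_s2 _ hac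
      obtain ⟨⟨x', z⟩, hx'z, -, hmap⟩ := mem_contractEdges.1 hES
      obtain ⟨hx', hz⟩ : π x' = a ∧ π z = c := Prod.mk.inj hmap
      have hstep : R x' z := ⟨hx'z, fun _ => by rwa [hx', hz]⟩
      exact (hfibre x x' (hx.trans hx'.symm)).trans (.head hstep (ih z hz))
  obtain ⟨p, hp⟩ := exists_isDiPath_of_reflTransGen (hwalk _ hq.reflTransGen_pathEdges x rfl)
  have hR := hp.rel_of_mem_pathEdges_s2
  refine ⟨p, hp.of_forall_mem_pathEdges fun e he => (hR e he).1, fun e he => ?_⟩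
  obtain ⟨f, hf, hne, rfl⟩ := mem_contractEdges.1 he
  exact List.mem_toFinset.2 ((hR f (List.mem_toFinset.1 hf)).2 hne)

end Paths

section Lift

variable {M : Mapping V VR} {M' : Mapping V' VR}

theorem nodeCost_section [Fintype VR] (h : I.IsFreeContraction J π ι)
    (hmV : M'.mV = ι ∘ M.mV) : M'.nodeCost J = M.nodeCost I := by
  simp only [Mapping.nodeCost, hmV, h.dRv_eq, Function.comp_apply, h.cSv_section]

variable [DecidableEq V']

theorem edgeLoad_le_edgeLoad_map (h : I.IsFreeContraction J π ι)
    (hsub : ∀ e ∈ I.ER, contractEdges π (M'.usedEdges e) ⊆ M.usedEdges e)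
    {f : V' × V'} (hne : π f.1 ≠ π f.2) (t : Fin τ) :
    M'.edgeLoad_s2 J f t ≤ M.edgeLoad_s2 I (Prod.map π π f) t := by
  rw [Mapping.edgeLoad_s2, Mapping.edgeLoad_s2, h.dRe_eq, h.ER_eq]
  refine Finset.sum_le_sum_of_subset fun e he => ?_
  obtain ⟨heR, hf⟩ := Finset.mem_filter.1 he
  exact Finset.mem_filter.2 ⟨heR, hsub e heR (mem_contractEdges.2 ⟨f, hf, hne, rfl⟩)⟩

theorem edgeCost_le_of_contractEdges_subset (h : I.IsFreeContraction J π ι)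
    (hused : ∀ e ∈ I.ER, M'.usedEdges e ⊆ J.ES)
    (hsub : ∀ e ∈ I.ER, contractEdges π (M'.usedEdges e) ⊆ M.usedEdges e) :
    M'.edgeCost J ≤ M.edgeCost I := by
  rw [Mapping.edgeCost, Mapping.edgeCost, h.dRe_eq, h.ER_eq]
  refine Finset.sum_le_sum fun e he => ?_
  rw [← h.sum_mul_cSe_contractEdges (hused e he)]
  exact Finset.sum_le_sum_of_subset (hsub e he)

variable [Fintype VR]

theorem nodeLoad_section (h : I.IsFreeContraction J π ι) (hmV : M'.mV = ι ∘ M.mV) (x : V)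
    (t : Fin τ) : M'.nodeLoad_s2 J (ι x) t = M.nodeLoad_s2 I x t := by
  simp only [Mapping.nodeLoad_s2, hmV, h.dRv_eq, Function.comp_apply, h.leftInverse.injective.eq_iff]

theorem exists_feasible_lift (h : I.IsFreeContraction J π ι) (hM : M.Feasible I) :
    ∃ M' : Mapping V' VR, M'.Feasible J ∧ M'.cost J ≤ M.cost I := by
  obtain ⟨hvalid, hnode, hedge⟩ := Mapping.feasible_iff_s2.1 hM
  have hlift : ∀ e ∈ I.ER, ∃ p,
      IsDiPath (fun a b => (a, b) ∈ J.ES) (ι (M.mV e.1)) (ι (M.mV e.2)) p ∧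
        contractEdges π (pathEdges p).toFinset ⊆ M.usedEdges e := fun e he =>
    h.exists_isDiPath_lift (by simpa only [h.leftInverse _] using hvalid e he)
  choose! P hpath hsub using hlift
  have hused : ∀ e ∈ I.ER, (pathEdges (P e)).toFinset ⊆ J.ES := fun e he f hf =>
    (hpath e he).rel_of_mem_pathEdges_s2 f (List.mem_toFinset.1 hf)
  let M' : Mapping V' VR := ⟨ι ∘ M.mV, P⟩
  refine ⟨M', Mapping.feasible_iff_s2.2 ⟨?_, fun y t => ?_, fun f hf t => ?_⟩, ?_⟩
  · exact fun e he => hpath e (h.ER_eq ▸ he)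
  · by_cases hy : y ∈ Set.range ι
    · obtain ⟨x, rfl⟩ := hy
      rw [h.nodeLoad_section (M := M) rfl, h.dSv_section]
      exact hnode x t
    · have hy' : y ∉ Set.range M'.mV := fun hmem => hy (Set.range_comp_subset_range _ _ hmem)
      rw [Mapping.nodeLoad_eq_zero_of_notMem_range J hy']
      exact zero_le
  · by_cases heq : π f.1 = π f.2
    · rw [h.dSe_eq_top f hf heq]
      exact le_top
    · have hfES : Prod.map π π f ∈ I.ES := h.ES_eq ▸ mem_contractEdges.2 ⟨f, hf, heq, rfl⟩
      rw [← h.dSe_map f hf heq]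
      exact (ENNReal.coe_le_coe.2 (h.edgeLoad_le_edgeLoad_map (M' := M') hsub heq t)).trans
        (hedge _ hfES t)
  · exact add_le_add (h.nodeCost_section (M' := M') rfl).le
      (h.edgeCost_le_of_contractEdges_subset (M' := M') hused hsub)

end Lift

section Contract

variable [DecidableEq V'] {M : Mapping V VR} {M' : Mapping V' VR}

theorem edgeLoad_map_le_edgeLoad (h : I.IsFreeContraction J π ι)
    (hused : ∀ e ∈ I.ER, M'.usedEdges e ⊆ J.ES)
    (hsub : ∀ e ∈ I.ER, M.usedEdges e ⊆ contractEdges π (M'.usedEdges e))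
    {f : V' × V'} (hf : f ∈ J.ES) (hne : π f.1 ≠ π f.2) (t : Fin τ) :
    M.edgeLoad_s2 I (Prod.map π π f) t ≤ M'.edgeLoad_s2 J f t := by
  rw [Mapping.edgeLoad_s2, Mapping.edgeLoad_s2, h.dRe_eq, h.ER_eq]
  refine Finset.sum_le_sum_of_subset fun e he => ?_
  obtain ⟨heR, hmem⟩ := Finset.mem_filter.1 he
  exact Finset.mem_filter.2
    ⟨heR, (h.mem_contractEdges_iff (hused e heR) hf hne).1 (hsub e heR hmem)⟩

theorem edgeCost_le_of_subset_contractEdges (h : I.IsFreeContraction J π ι)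
    (hused : ∀ e ∈ I.ER, M'.usedEdges e ⊆ J.ES)
    (hsub : ∀ e ∈ I.ER, M.usedEdges e ⊆ contractEdges π (M'.usedEdges e)) :
    M.edgeCost I ≤ M'.edgeCost J := by
  rw [Mapping.edgeCost, Mapping.edgeCost, h.dRe_eq, h.ER_eq]
  refine Finset.sum_le_sum fun e he => ?_
  rw [← h.sum_mul_cSe_contractEdges (hused e he)]
  exact Finset.sum_le_sum_of_subset (hsub e he)

variable [Fintype VR]

theorem dRv_eq_zero_of_section_ne (h : I.IsFreeContraction J π ι)
    (hcap : ∀ y t, (M'.nodeLoad_s2 J y t : ℝ≥0∞) ≤ J.dSv y t) {w : VR}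
    (hw : ι (π (M'.mV w)) ≠ M'.mV w) (t : Fin τ) : I.dRv w t = 0 := by
  have hload : M'.nodeLoad_s2 J (M'.mV w) t = 0 := by
    simpa [h.dSv_eq_zero _ hw] using hcap (M'.mV w) t
  rw [← h.dRv_eq]
  exact Finset.sum_eq_zero_iff.1 hload w (by simp)

theorem nodeLoad_le_nodeLoad_section (h : I.IsFreeContraction J π ι) (hmV : M.mV = π ∘ M'.mV)
    (hcap : ∀ y t, (M'.nodeLoad_s2 J y t : ℝ≥0∞) ≤ J.dSv y t) (x : V) (t : Fin τ) :
    M.nodeLoad_s2 I x t ≤ M'.nodeLoad_s2 J (ι x) t := by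
  rw [Mapping.nodeLoad_s2, Mapping.nodeLoad_s2, h.dRv_eq]
  refine Finset.sum_le_sum_of_ne_zero fun w hw hne => ?_
  have hsection : ι (π (M'.mV w)) = M'.mV w := by
    by_contra hw'
    exact hne (h.dRv_eq_zero_of_section_ne hcap hw' t)
  have hx : π (M'.mV w) = x := by simpa [hmV] using hw
  simp [← hx, hsection]

theorem nodeCost_le_of_comp (h : I.IsFreeContraction J π ι) (hmV : M.mV = π ∘ M'.mV)
    (hcap : ∀ y t, (M'.nodeLoad_s2 J y t : ℝ≥0∞) ≤ J.dSv y t) :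
    M.nodeCost I ≤ M'.nodeCost J := by
  refine Finset.sum_le_sum fun w _ => Finset.sum_le_sum fun t _ => ?_
  rw [h.dRv_eq, hmV, Function.comp_apply]
  by_cases hw : ι (π (M'.mV w)) = M'.mV w
  · rw [← h.cSv_section, hw]
  · simp [h.dRv_eq_zero_of_section_ne hcap hw t]

theorem exists_feasible_contract (h : I.IsFreeContraction J π ι) (hM' : M'.Feasible J) :
    ∃ M : Mapping V VR, M.Feasible I ∧ M.cost I ≤ M'.cost J := by
  obtain ⟨hvalid, hnode, hedge⟩ := Mapping.feasible_iff_s2.1 hM'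
  rw [Mapping.Valid, h.ER_eq] at hvalid
  choose! Q hpath hsub using fun e he => h.exists_isDiPath_contract (hvalid e he)
  have hused : ∀ e ∈ I.ER, M'.usedEdges e ⊆ J.ES := fun e he f hf =>
    (hvalid e he).rel_of_mem_pathEdges_s2 f (List.mem_toFinset.1 hf)
  let M : Mapping V VR := ⟨π ∘ M'.mV, Q⟩
  refine ⟨M, Mapping.feasible_iff_s2.2 ⟨hpath, fun x t => ?_, fun e he t => ?_⟩, ?_⟩
  · rw [← h.dSv_section]
    exact (ENNReal.coe_le_coe.2 (h.nodeLoad_le_nodeLoad_section rfl hnode x t)).trans (hnode _ t)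
  · obtain ⟨f, hf, hne, rfl⟩ := mem_contractEdges.1 (h.ES_eq ▸ he)
    rw [h.dSe_map f hf hne]
    exact (ENNReal.coe_le_coe.2 (h.edgeLoad_map_le_edgeLoad (M := M) hused hsub hf hne t)).trans
      (hedge f hf t)
  · exact add_le_add (h.nodeCost_le_of_comp (M := M) rfl hnode)
      (h.edgeCost_le_of_subset_contractEdges (M := M) hused hsub)

end Contract

theorem exists_feasible_cost_le_iff [DecidableEq V'] [Fintype VR]
    (h : I.IsFreeContraction J π ι) (k : ℝ≥0) :
    (∃ M : Mapping V VR, M.Feasible I ∧ M.cost I ≤ k) ↔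
      ∃ M' : Mapping V' VR, M'.Feasible J ∧ M'.cost J ≤ k := by
  constructor
  · rintro ⟨M, hM, hk⟩
    obtain ⟨M', hM', hle⟩ := h.exists_feasible_lift hM
    exact ⟨M', hM', hle.trans hk⟩
  · rintro ⟨M', hM', hk⟩
    obtain ⟨M, hM, hle⟩ := h.exists_feasible_contract hM'
    exact ⟨M, hM, hle.trans hk⟩

end VNEP.IsFreeContraction

theorem mem_edgesOf {V : Type*} [Fintype V] [DecidableEq V] {par : V → V} {e : V × V} :
    e ∈ edgesOf par ↔ ∃ x, par x ≠ x ∧ (e = (x, par x) ∨ e = (par x, x)) := by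
  obtain ⟨a, b⟩ := e
  simp only [edgesOf, Finset.mem_filter, Finset.mem_univ, true_and, Prod.mk.injEq]
  constructor
  · rintro ⟨hne, rfl | rfl⟩
    · exact ⟨a, hne.symm, .inl ⟨rfl, rfl⟩⟩
    · exact ⟨b, hne, .inr ⟨rfl, rfl⟩⟩
  · rintro ⟨x, hx, ⟨rfl, rfl⟩ | ⟨rfl, rfl⟩⟩
    · exact ⟨hx.symm, .inl rfl⟩
    · exact ⟨hx, .inr rfl⟩

namespace RTree

variable {V : Type*} {T : RTree V} {v : V}

theorem eq_root_of_mem_periodicPts {x : V} (hx : x ∈ Function.periodicPts T.parent) :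
    x = T.root := by
  obtain ⟨n, hn, hper⟩ := hx
  obtain ⟨m, hm⟩ := T.reaches_root x
  have hle : m ≤ n * m := Nat.le_mul_of_pos_left m hn
  have hiter : T.parent^[n * m - m + m] x = x := by
    rw [Nat.sub_add_cancel hle]
    exact hper.mul_const m
  rwa [Function.iterate_add_apply, hm, Function.iterate_fixed T.parent_root, eq_comm] at hiter

theorem parent_eq_self_of_parent_parent_eq {x : V} (hx : T.parent (T.parent x) = x) :
    T.parent x = x := by
  rw [eq_root_of_mem_periodicPts ⟨2, two_pos, hx⟩, T.parent_root]

theorem not_isChild_root (T : RTree V) (v : V) : ¬ T.IsChild T.root v := fun h =>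
  h.1 (T.parent_root.symm.trans h.2)

variable {β : Type*} {par : V ⊕ β → V ⊕ β}

/-- `par` is a parent function obtained from `T` by making a family `β` of fresh nodes children of
`v` and hanging some of the children of `v` under fresh nodes instead, in an arbitrary way. -/
structure IsSplitAt (T : RTree V) (v : V) (par : V ⊕ β → V ⊕ β) : Prop where
  parent_inr : ∀ b, par (Sum.inr b) = Sum.inl v
  parent_inl : ∀ w, par (Sum.inl w) = Sum.inl (T.parent w) ∨
    T.IsChild w v ∧ ∃ b, par (Sum.inl w) = Sum.inr b

/-- The contraction that undoes a split at `v` by identifying all fresh nodes with `v`. -/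
def mergeAt (v : V) : V ⊕ β → V :=
  Sum.elim id fun _ => v

theorem mergeAt_inl (v w : V) : mergeAt v (Sum.inl w : V ⊕ β) = w :=
  rfl

theorem mergeAt_inr (v : V) (b : β) : mergeAt v (Sum.inr b) = v :=
  rfl

theorem isSplitAt_splitParent {t : ℕ} {u : Fin t → V} (hu : ∀ i, T.IsChild (u i) v) :
    T.IsSplitAt v (splitParent T v u) where
  parent_inr _ := rfl
  parent_inl w := by
    by_cases hw : ∃ i, u i = w
    · obtain ⟨i, rfl⟩ := hw
      refine .inr ⟨hu i, ?_⟩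
      rcases lt_or_ge (i : ℕ) (t / 2) with hi | hi
      · exact ⟨false, if_pos ⟨i, hi, rfl⟩⟩
      · have hright : ∃ j : Fin t, t / 2 ≤ (j : ℕ) ∧ u j = u i := ⟨i, hi, rfl⟩
        rw [splitParent, if_pos hright]
        split_ifs
        exacts [⟨false, rfl⟩, ⟨true, rfl⟩]
    · left
      rw [splitParent, if_neg fun ⟨i, _, hi⟩ => hw ⟨i, hi⟩, if_neg fun ⟨i, _, hi⟩ => hw ⟨i, hi⟩]

namespace IsSplitAt

theorem parent_root (h : T.IsSplitAt v par) : par (Sum.inl T.root) = Sum.inl T.root := by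
  rcases h.parent_inl T.root with hroot | ⟨hchild, -⟩
  · rw [hroot, T.parent_root]
  · exact absurd hchild (T.not_isChild_root v)

theorem exists_iterate_inl_eq_parent (h : T.IsSplitAt v par) (w : V) :
    ∃ n : ℕ, par^[n] (Sum.inl w) = Sum.inl (T.parent w) := by
  rcases h.parent_inl w with hw | ⟨hchild, b, hb⟩
  · exact ⟨1, hw⟩
  · refine ⟨2, ?_⟩
    rw [hchild.2, Function.iterate_succ_apply, hb]
    exact h.parent_inr b

theorem exists_iterate_inl_eq_iterate_parent (h : T.IsSplitAt v par) (w : V) (n : ℕ) :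
    ∃ m : ℕ, par^[m] (Sum.inl w) = Sum.inl (T.parent^[n] w) := by
  induction n with
  | zero => exact ⟨0, rfl⟩
  | succ n ih =>
    obtain ⟨m, hm⟩ := ih
    obtain ⟨l, hl⟩ := h.exists_iterate_inl_eq_parent (T.parent^[n] w)
    exact ⟨l + m, by rw [Function.iterate_add_apply, hm, hl, Function.iterate_succ_apply']⟩

theorem reaches_root (h : T.IsSplitAt v par) (x : V ⊕ β) :
    ∃ n : ℕ, par^[n] x = Sum.inl T.root := by
  have hinl : ∀ w, ∃ n : ℕ, par^[n] (Sum.inl w) = Sum.inl T.root := fun w => by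
    obtain ⟨n, hn⟩ := T.reaches_root w
    exact hn ▸ h.exists_iterate_inl_eq_iterate_parent w n
  rcases x with w | b
  · exact hinl w
  · obtain ⟨n, hn⟩ := hinl v
    exact ⟨n + 1, by rw [Function.iterate_succ_apply, h.parent_inr, hn]⟩

theorem mergeAt_parent_inl (h : T.IsSplitAt v par) (w : V) :
    mergeAt v (par (Sum.inl w)) = T.parent w := by
  rcases h.parent_inl w with hw | ⟨hchild, b, hb⟩
  · rw [hw, mergeAt_inl]
  · rw [hb, hchild.2, mergeAt_inr]

section Edges

variable [Fintype V] [DecidableEq V] [Fintype β] [DecidableEq β] {f : (V ⊕ β) × (V ⊕ β)}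

theorem mem_edgesOf_and_ne_iff (h : T.IsSplitAt v par) :
    f ∈ edgesOf par ∧ mergeAt v f.1 ≠ mergeAt v f.2 ↔ ∃ w, T.parent w ≠ w ∧
      (f = (Sum.inl w, par (Sum.inl w)) ∨ f = (par (Sum.inl w), Sum.inl w)) := by
  rw [mem_edgesOf]
  constructor
  · rintro ⟨⟨w | b, -, hf⟩, hne⟩
    · refine ⟨w, fun hw => hne ?_, hf⟩
      rcases hf with rfl | rfl <;> rw [h.mergeAt_parent_inl, hw, mergeAt_inl]
    · refine absurd ?_ hne
      rcases hf with rfl | rfl <;> rw [h.parent_inr, mergeAt_inl, mergeAt_inr]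
  · rintro ⟨w, hw, hf⟩
    refine ⟨⟨Sum.inl w, fun hpar => hw ?_, hf⟩, ?_⟩
    · rw [← h.mergeAt_parent_inl, hpar, mergeAt_inl]
    · rcases hf with rfl | rfl <;> rw [h.mergeAt_parent_inl, mergeAt_inl]
      exacts [hw.symm, hw]

theorem eq_of_mergeAt_eq (h : T.IsSplitAt v par) (hf : f ∈ edgesOf par)
    (heq : mergeAt v f.1 = mergeAt v f.2) :
    ∃ b, f = (Sum.inl v, Sum.inr b) ∨ f = (Sum.inr b, Sum.inl v) := by
  obtain ⟨w | b, hne, hfx⟩ := mem_edgesOf.1 hf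
  · have hw : T.parent w = w := by
      rw [← h.mergeAt_parent_inl]
      rcases hfx with rfl | rfl
      exacts [heq.symm, heq]
    rcases h.parent_inl w with hpar | ⟨hchild, -⟩
    · exact absurd (hpar.trans (congrArg Sum.inl hw)) hne
    · exact absurd (hw.symm.trans hchild.2) hchild.1
  · rw [h.parent_inr] at hfx
    exact ⟨b, hfx.symm⟩

theorem edges_eq_contractEdges (h : T.IsSplitAt v par) :
    T.edges = contractEdges (mergeAt v) (edgesOf par) := by
  have hup : ∀ w,
      Prod.map (mergeAt v) (mergeAt v) ((Sum.inl w : V ⊕ β), par (Sum.inl w)) = (w, T.parent w) :=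
    fun w => by rw [Prod.map_apply, mergeAt_inl, h.mergeAt_parent_inl]
  have hdown : ∀ w,
      Prod.map (mergeAt v) (mergeAt v) (par (Sum.inl w), (Sum.inl w : V ⊕ β)) = (T.parent w, w) :=
    fun w => by rw [Prod.map_apply, mergeAt_inl, h.mergeAt_parent_inl]
  ext e
  change e ∈ edgesOf T.parent ↔ _
  simp only [mem_edgesOf (par := T.parent), mem_contractEdges, ← and_assoc,
    h.mem_edgesOf_and_ne_iff]
  constructor
  · rintro ⟨w, hw, rfl | rfl⟩
    · exact ⟨_, ⟨w, hw, .inl rfl⟩, hup w⟩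
    · exact ⟨_, ⟨w, hw, .inr rfl⟩, hdown w⟩
  · rintro ⟨_, ⟨w, hw, rfl | rfl⟩, rfl⟩
    · exact ⟨w, hw, .inl (hup w)⟩
    · exact ⟨w, hw, .inr (hdown w)⟩

theorem injOn_map_mergeAt (h : T.IsSplitAt v par) :
    Set.InjOn (Prod.map (mergeAt v) (mergeAt v))
      {f | f ∈ edgesOf par ∧ mergeAt v f.1 ≠ mergeAt v f.2} := by
  have hcycle : ∀ {w w'}, T.parent w ≠ w → w = T.parent w' → T.parent w ≠ w' := by
    rintro _ w' hw rfl hw'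
    rw [hw'] at hw
    exact hw (parent_eq_self_of_parent_parent_eq hw').symm
  intro f hf g hg hfg
  obtain ⟨w, hw, rfl | rfl⟩ := h.mem_edgesOf_and_ne_iff.1 hf <;>
    obtain ⟨w', hw', rfl | rfl⟩ := h.mem_edgesOf_and_ne_iff.1 hg <;>
    obtain ⟨hfst, hsnd⟩ := Prod.mk.inj hfg <;>
    simp only [h.mergeAt_parent_inl] at hfst hsnd
  · obtain rfl : w = w' := hfst
    rfl
  · exact absurd hsnd (hcycle hw hfst)
  · exact absurd hfst (hcycle hw hsnd)
  · obtain rfl : w = w' := hsnd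
    rfl

theorem map_mergeAt_eq {γ : Type*} (h : T.IsSplitAt v par) {c : V × V → γ}
    {c' : (V ⊕ β) × (V ⊕ β) → γ} (hold : ∀ x y, c' (Sum.inl x, Sum.inl y) = c (x, y))
    (hchild : ∀ b w, T.IsChild w v →
      c' (Sum.inr b, Sum.inl w) = c (v, w) ∧ c' (Sum.inl w, Sum.inr b) = c (w, v))
    (hf : f ∈ edgesOf par) (hne : mergeAt v f.1 ≠ mergeAt v f.2) :
    c (Prod.map (mergeAt v) (mergeAt v) f) = c' f := by
  obtain ⟨w, -, rfl | rfl⟩ := h.mem_edgesOf_and_ne_iff.1 ⟨hf, hne⟩ <;>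
    rcases h.parent_inl w with hpar | ⟨hw, b, hpar⟩ <;> rw [hpar]
  · exact (hold _ _).symm
  · exact (hchild b w hw).2.symm
  · exact (hold _ _).symm
  · exact (hchild b w hw).1.symm

theorem fibre_connected (h : T.IsSplitAt v par) (x y : V ⊕ β) (hxy : mergeAt v x = mergeAt v y) :
    Relation.ReflTransGen (fun a b => (a, b) ∈ edgesOf par ∧ mergeAt v a = mergeAt v b) x y := by
  have hne : ∀ b : β, par (Sum.inr b) ≠ Sum.inr b := fun b => h.parent_inr b ▸ Sum.inl_ne_inr
  have hdown : ∀ b : β, (Sum.inl v, Sum.inr b) ∈ edgesOf par := fun b =>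
    mem_edgesOf.2 ⟨Sum.inr b, hne b, .inr (by rw [h.parent_inr])⟩
  have hup : ∀ b : β, (Sum.inr b, Sum.inl v) ∈ edgesOf par := fun b =>
    mem_edgesOf.2 ⟨Sum.inr b, hne b, .inl (by rw [h.parent_inr])⟩
  rcases x with x | b <;> rcases y with y | b'
  · obtain rfl : x = y := hxy
    exact .refl
  · obtain rfl : x = v := hxy
    exact .single ⟨hdown b', rfl⟩
  · obtain rfl : v = y := hxy
    exact .single ⟨hup b, rfl⟩
  · exact .head ⟨hup b, rfl⟩ (.single ⟨hdown b', rfl⟩)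

end Edges

end IsSplitAt

end RTree

theorem split_step_correct_general {VS VR β : Type*} [Fintype VS] [DecidableEq VS] [Fintype VR]
    [Fintype β] [DecidableEq β] {τ : ℕ} (T : RTree VS) (I : VNEP VS VR τ)
    (hES : I.ES = T.edges) (v : VS) (par : VS ⊕ β → VS ⊕ β) (hpar : T.IsSplitAt v par)
    (It : VNEP (VS ⊕ β) VR τ) (hES' : It.ES = edgesOf par)
    (hER : It.ER = I.ER) (hdRv : It.dRv = I.dRv) (hdRe : It.dRe = I.dRe)
    (hdSv : It.dSv = Sum.elim I.dSv (fun _ => 0))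
    (hcSv : ∀ x : VS, It.cSv (Sum.inl x) = I.cSv x)
    (hdSeOld : ∀ x y : VS, It.dSe (Sum.inl x, Sum.inl y) = I.dSe (x, y))
    (hcSeOld : ∀ x y : VS, It.cSe (Sum.inl x, Sum.inl y) = I.cSe (x, y))
    (hdSeChild : ∀ b w, T.IsChild w v →
      It.dSe (Sum.inr b, Sum.inl w) = I.dSe (v, w) ∧
      It.dSe (Sum.inl w, Sum.inr b) = I.dSe (w, v))
    (hcSeChild : ∀ b w, T.IsChild w v →
      It.cSe (Sum.inr b, Sum.inl w) = I.cSe (v, w) ∧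
      It.cSe (Sum.inl w, Sum.inr b) = I.cSe (w, v))
    (hdSeNew : ∀ b, It.dSe (Sum.inl v, Sum.inr b) = ⊤ ∧ It.dSe (Sum.inr b, Sum.inl v) = ⊤)
    (hcSeNew : ∀ b, It.cSe (Sum.inl v, Sum.inr b) = 0 ∧ It.cSe (Sum.inr b, Sum.inl v) = 0) :
    (par (Sum.inl T.root) = Sum.inl T.root ∧
      ∀ x : VS ⊕ β, ∃ n : ℕ, par^[n] x = Sum.inl T.root) ∧
    (∀ k : ℝ≥0,
      (∃ M : Mapping VS VR, M.Feasible I ∧ M.cost I ≤ k) ↔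
      (∃ M' : Mapping (VS ⊕ β) VR, M'.Feasible It ∧ M'.cost It ≤ k)) := by
  have hcontract : I.IsFreeContraction It (RTree.mergeAt v) Sum.inl :=
    { ER_eq := hER
      dRv_eq := hdRv
      dRe_eq := hdRe
      leftInverse := fun _ => rfl
      dSv_section := fun x => congrFun hdSv (Sum.inl x)
      cSv_section := hcSv
      dSv_eq_zero := by
        rintro (x | b) hy
        · exact absurd rfl hy
        · exact congrFun hdSv (Sum.inr b)
      ES_eq := by rw [hES, hES', hpar.edges_eq_contractEdges]
      injOn := by simpa only [hES'] using hpar.injOn_map_mergeAt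
      dSe_map := fun f hf => hpar.map_mergeAt_eq hdSeOld hdSeChild (hES' ▸ hf)
      cSe_map := fun f hf => hpar.map_mergeAt_eq hcSeOld hcSeChild (hES' ▸ hf)
      dSe_eq_top := fun f hf heq => by
        obtain ⟨b, rfl | rfl⟩ := hpar.eq_of_mergeAt_eq (hES' ▸ hf) heq
        exacts [(hdSeNew b).1, (hdSeNew b).2]
      cSe_eq_zero := fun f hf heq => by
        obtain ⟨b, rfl | rfl⟩ := hpar.eq_of_mergeAt_eq (hES' ▸ hf) heq
        exacts [(hcSeNew b).1, (hcSeNew b).2]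
      fibre_connected := by simpa only [hES'] using hpar.fibre_connected }
  exact ⟨⟨hpar.parent_root, hpar.reaches_root⟩, hcontract.exists_feasible_cost_le_iff⟩

/-- Lemma 3.2 of the paper (single split step): let `I` be a VNEP instance whose substrate
is the bidirectional tree given by `T`, let `v` be a node with children `u 0, …, u (t-1)`
for some `t > 2`, and let `Ĩ` (`It`) be the instance on `VS ⊕ Bool` obtained by the split
step: the fresh nodes `v_ℓ`, `v_r` get capacity `0` and cost `0`; the edges between the
children of `v` and their new parents keep their capacities and costs; the four new edges
between `v` and `v_ℓ`, `v_r` get capacity `∞` and cost `0`; all other data is unchanged.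
Then the new substrate is again a (bidirectional) rooted tree, and for every `k`, `I` has a
feasible mapping of cost at most `k` iff `Ĩ` does. -/
theorem split_step_correct {VS VR : Type*} [Fintype VS] [DecidableEq VS]
    [Fintype VR] [DecidableEq VR] {τ : ℕ} (T : RTree VS) (I : VNEP VS VR τ)
    (hES : I.ES = T.edges) (v : VS) (t : ℕ) (ht : 2 < t) (u : Fin t → VS)
    (hu : Function.Injective u) (huc : ∀ w : VS, T.IsChild w v ↔ ∃ i : Fin t, u i = w)
    (It : VNEP (VS ⊕ Bool) VR τ)
    (hES' : It.ES = edgesOf (splitParent T v u))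
    (hER : It.ER = I.ER) (hdRv : It.dRv = I.dRv) (hdRe : It.dRe = I.dRe)
    (hdSv : It.dSv = Sum.elim I.dSv (fun _ => 0))
    (hcSv : It.cSv = Sum.elim I.cSv (fun _ => 0))
    (hdSeOld : ∀ x y : VS, It.dSe (Sum.inl x, Sum.inl y) = I.dSe (x, y))
    (hcSeOld : ∀ x y : VS, It.cSe (Sum.inl x, Sum.inl y) = I.cSe (x, y))
    (hdSeChild : ∀ (s : Bool) (i : Fin t),
      It.dSe (Sum.inr s, Sum.inl (u i)) = I.dSe (v, u i) ∧
      It.dSe (Sum.inl (u i), Sum.inr s) = I.dSe (u i, v))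
    (hcSeChild : ∀ (s : Bool) (i : Fin t),
      It.cSe (Sum.inr s, Sum.inl (u i)) = I.cSe (v, u i) ∧
      It.cSe (Sum.inl (u i), Sum.inr s) = I.cSe (u i, v))
    (hdSeNew : ∀ s : Bool,
      It.dSe (Sum.inl v, Sum.inr s) = ⊤ ∧ It.dSe (Sum.inr s, Sum.inl v) = ⊤)
    (hcSeNew : ∀ s : Bool,
      It.cSe (Sum.inl v, Sum.inr s) = 0 ∧ It.cSe (Sum.inr s, Sum.inl v) = 0) :
    (splitParent T v u (Sum.inl T.root) = Sum.inl T.root ∧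
      ∀ x : VS ⊕ Bool, ∃ n : ℕ, (splitParent T v u)^[n] x = Sum.inl T.root) ∧
    (∀ k : ℝ≥0,
      (∃ M : Mapping VS VR, M.Feasible I ∧ M.cost I ≤ k) ↔
      (∃ M' : Mapping (VS ⊕ Bool) VR, M'.Feasible It ∧ M'.cost It ≤ k)) := by
  have hchild : ∀ i, T.IsChild (u i) v := fun i => (huc _).2 ⟨i, rfl⟩
  exact split_step_correct_general T I hES v _ (RTree.isSplitAt_splitParent hchild) It hES' hER hdRv
    hdRe hdSv (congrFun hcSv <| Sum.inl ·) hdSeOld hcSeOld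
    (fun s w hw => ((huc w).1 hw).elim fun i hi => hi ▸ hdSeChild s i)
    (fun s w hw => ((huc w).1 hw).elim fun i hi => hi ▸ hcSeChild s i) hdSeNew hcSeNew
end
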